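/- Let f₁, …, f_n ∈ L¹(ℝ²) be a finite family of filters such that for every ω ∈ ℝ², Σ_{k=1}^{n} |𝓕f_k(ω)|² > 0. If x, y ∈ L¹(ℝ²) satisfy σ(γ · (x ∗ f_k)(u)) = σ(γ · (y ∗ f_k)(u)) for almost every u ∈ ℝ², for every k and both γ ∈ {−1, +1}, then x = y almost everywhere. That is, the one-layer nonlinear operator U¹x = {σ(γ · x ∗ f_k) : γ = ±1, 1 ≤ k ≤ n} is invertible. -/

import Mathlib

open MeasureTheory
open scoped RealInnerProductSpace

/-- The Fourier transform on `ℝ²` with convention `𝓕f(ω) = ∫ f(u) e^{−i⟨u,ω⟩} du`. -/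
noncomputable def fourier2 (f : EuclideanSpace ℝ (Fin 2) → ℝ)
    (ω : EuclideanSpace ℝ (Fin 2)) : ℂ :=
  ∫ u : EuclideanSpace ℝ (Fin 2), (f u : ℂ) * Complex.exp (-Complex.I * (⟪u, ω⟫ : ℂ))

/-- Convolution on `ℝ²`: `(f ∗ g)(u) = ∫ f(u−t) g(t) dt`. -/
noncomputable def conv2 (f g : EuclideanSpace ℝ (Fin 2) → ℝ)
    (u : EuclideanSpace ℝ (Fin 2)) : ℝ :=
  ∫ t : EuclideanSpace ℝ (Fin 2), f (u - t) * g t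

/-!
The two signs of the ReLU recover each convolution from its positive and negative parts, so the
signals have the same convolution with every filter. By the convolution theorem their Fourier
transforms agree wherever some filter has a nonzero Fourier transform; this set need only be dense,
because the Fourier transform of an integrable function is continuous. Finally, an integrable
function is determined by its Fourier transform: self-adjointness turns its integral against a test
function `φ` into the integral of its Fourier transform against the inverse Fourier transform
of `φ`.
-/

open scoped FourierTransform Convolution SchwartzMap

lemma eq_of_forall_max_zero_sign_mul_eq {R : Type*} [Ring R] [LinearOrder R] [IsOrderedRing R]
    {a b : R} (h : ∀ γ ∈ ({-1, 1} : Set R), max 0 (γ * a) = max 0 (γ * b)) : a = b := by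
  refine posPart_negPart_inj.mp ⟨?_, ?_⟩
  · simpa [posPart_def, max_comm] using h 1 (by simp)
  · simpa [negPart_def, max_comm] using h (-1) (by simp)

section

variable {V E : Type*} [NormedAddCommGroup V] [InnerProductSpace ℝ V] [FiniteDimensional ℝ V]
  [MeasurableSpace V] [BorelSpace V] [NormedAddCommGroup E] [NormedSpace ℂ E]

lemma continuous_fourier_of_integrable {f : V → E} (hf : Integrable f) : Continuous (𝓕 f) :=
  VectorFourier.fourierIntegral_continuous Real.continuous_fourierChar
    (innerSL ℝ).continuous₂ hf

lemma ofReal_convolution (f g : V → ℝ) (u : V) :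
    ((f ⋆ g) u : ℂ) =
      ((fun v ↦ (f v : ℂ)) ⋆[ContinuousLinearMap.lsmul ℂ ℂ] fun v ↦ (g v : ℂ)) u := by
  simp [convolution_def, ← integral_complex_ofReal]

variable [CompleteSpace E]

lemma integral_fourier_smul_eq_of_integrable {f : V → ℂ} {g : V → E}
    (hf : Integrable f) (hg : Integrable g) :
    ∫ ξ, 𝓕 f ξ • g ξ = ∫ u, f u • 𝓕 g u := by
  simpa using! VectorFourier.integral_fourierIntegral_smul_eq_flip (L := innerₗ V)
    Real.continuous_fourierChar continuous_inner hf hg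

lemma integral_schwartz_smul_eq_integral_fourierInv_smul (φ : 𝓢(V, ℂ)) {f : V → E}
    (hf : Integrable f) : ∫ u, φ u • f u = ∫ ξ, 𝓕⁻ φ ξ • 𝓕 f ξ := by
  rw [← integral_fourier_smul_eq_of_integrable (𝓕⁻ φ).integrable hf, ← SchwartzMap.fourier_coe,
    FourierTransform.fourier_fourierInv_eq]

open scoped ContDiff in
theorem ae_eq_of_fourier_eq {f g : V → E} (hf : Integrable f) (hg : Integrable g)
    (h : 𝓕 f = 𝓕 g) : f =ᵐ[volume] g := by
  refine ae_eq_of_integral_contDiff_smul_eq hf.locallyIntegrable hg.locallyIntegrable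
    fun φ hφ hφc ↦ ?_
  have hΦc : HasCompactSupport (Complex.ofRealCLM ∘ φ) := hφc.comp_left rfl
  have hΦ : ContDiff ℝ ∞ (Complex.ofRealCLM ∘ φ) := by fun_prop
  let Φ : 𝓢(V, ℂ) := hΦc.toSchwartzMap hΦ
  calc ∫ u, φ u • f u = ∫ u, Φ u • f u := by simp [Φ]
    _ = ∫ u, Φ u • g u := by
      rw [integral_schwartz_smul_eq_integral_fourierInv_smul Φ hf, h,
        ← integral_schwartz_smul_eq_integral_fourierInv_smul Φ hg]
    _ = ∫ u, φ u • g u := by simp [Φ]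

theorem ae_eq_of_convolution_ae_eq {ι : Type*} {f : ι → V → ℂ} {x y : V → E}
    (hf : ∀ k, Integrable (f k)) (hx : Integrable x) (hy : Integrable y)
    (hframe : Dense {ω | ∃ k, 𝓕 (f k) ω ≠ 0})
    (h : ∀ k, f k ⋆[ContinuousLinearMap.lsmul ℂ ℂ] x =ᵐ[volume]
      f k ⋆[ContinuousLinearMap.lsmul ℂ ℂ] y) :
    x =ᵐ[volume] y := by
  refine ae_eq_of_fourier_eq hx hy <|
    (continuous_fourier_of_integrable hx).ext_on hframe (continuous_fourier_of_integrable hy) ?_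
  rintro ω ⟨k, hk⟩
  have hmul : 𝓕 (f k) ω • 𝓕 x ω = 𝓕 (f k) ω • 𝓕 y ω := by
    rw [← Real.fourier_smul_convolution_eq (hf k) hx, ← Real.fourier_smul_convolution_eq (hf k) hy]
    exact Real.fourier_congr_ae (h k) ω
  exact smul_right_injective E hk hmul

end

theorem relu_layer_invertible_general {V ι : Type*} [NormedAddCommGroup V] [InnerProductSpace ℝ V]
    [FiniteDimensional ℝ V] [MeasurableSpace V] [BorelSpace V]
    (f : ι → V → ℝ) (hf : ∀ k, Integrable (f k))
    (hframe : Dense {ω | ∃ k, 𝓕 (fun u ↦ (f k u : ℂ)) ω ≠ 0})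
    (x y : V → ℝ) (hx : Integrable x) (hy : Integrable y)
    (heq : ∀ k, ∀ γ ∈ ({-1, 1} : Set ℝ), ∀ᵐ u,
      max 0 (γ * (f k ⋆ x) u) = max 0 (γ * (f k ⋆ y) u)) :
    ∀ᵐ u, x u = y u := by
  have hconv (k : ι) : f k ⋆ x =ᵐ[volume] f k ⋆ y := by
    filter_upwards [(ae_ball_iff (Set.toFinite _).countable).mpr (heq k)] with u hu
    exact eq_of_forall_max_zero_sign_mul_eq hu
  have hcomplex : (fun u ↦ (x u : ℂ)) =ᵐ[volume] fun u ↦ (y u : ℂ) := by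
    refine ae_eq_of_convolution_ae_eq (f := fun k u ↦ (f k u : ℂ)) (fun k ↦ (hf k).ofReal)
      hx.ofReal hy.ofReal hframe fun k ↦ ?_
    filter_upwards [hconv k] with u hu
    rw [← ofReal_convolution, ← ofReal_convolution, hu]
  exact hcomplex.mono fun u hu ↦ Complex.ofReal_injective hu

lemma conv2_eq_convolution_swap (f g : EuclideanSpace ℝ (Fin 2) → ℝ) : conv2 f g = g ⋆ f := by
  ext u
  simp [conv2, convolution_def, mul_comm]

lemma fourier_ofReal_eq_fourier2 (f : EuclideanSpace ℝ (Fin 2) → ℝ)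
    (ω : EuclideanSpace ℝ (Fin 2)) :
    𝓕 (fun u ↦ (f u : ℂ)) ω = fourier2 f ((2 * Real.pi) • ω) := by
  rw [Real.fourier_eq', fourier2]
  congr 1 with u
  rw [smul_eq_mul, mul_comm, real_inner_smul_right]
  congr 2
  push_cast
  ring

lemma exists_fourier_ofReal_ne_zero {ι : Type*} [Fintype ι]
    {f : ι → EuclideanSpace ℝ (Fin 2) → ℝ} (hframe : ∀ ω, 0 < ∑ k, ‖fourier2 (f k) ω‖ ^ 2)
    (ω : EuclideanSpace ℝ (Fin 2)) : ∃ k, 𝓕 (fun u ↦ (f k u : ℂ)) ω ≠ 0 := by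
  obtain ⟨k, -, hk⟩ := Finset.exists_ne_zero_of_sum_ne_zero (hframe ((2 * Real.pi) • ω)).ne'
  exact ⟨k, by simpa [fourier_ofReal_eq_fourier2] using hk⟩

/-- The one-layer nonlinear operator `U¹x = {σ(γ · x ∗ f_k) : γ = ±1, k}` built
from a filter bank whose Fourier transforms have no common zero is invertible. -/
theorem relu_layer_invertible
    (n : ℕ) (f : Fin n → EuclideanSpace ℝ (Fin 2) → ℝ)
    (hf : ∀ k, Integrable (f k))
    (hframe : ∀ ω : EuclideanSpace ℝ (Fin 2), 0 < ∑ k, ‖fourier2 (f k) ω‖ ^ 2)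
    (x y : EuclideanSpace ℝ (Fin 2) → ℝ)
    (hx : Integrable x) (hy : Integrable y)
    (heq : ∀ k, ∀ γ ∈ ({-1, 1} : Set ℝ), ∀ᵐ u : EuclideanSpace ℝ (Fin 2),
      max 0 (γ * conv2 x (f k) u) = max 0 (γ * conv2 y (f k) u)) :
    ∀ᵐ u : EuclideanSpace ℝ (Fin 2), x u = y u := by
  simp only [conv2_eq_convolution_swap] at heq
  exact relu_layer_invertible_general f hf
    (fun ω ↦ subset_closure (exists_fourier_ofReal_ne_zero hframe ω)) x y hx hy heq
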